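/- Every internally 4-connected binary matroid with exactly 9 elements is isomorphic to M(K_{3,3}) or M*(K_{3,3}). -/

import Mathlib

open Set Matroid
open scoped Classical

/-- `M` is the binary matroid on ground set `E` represented by the vectors `v`. -/
def IsBinRepOn {α W : Type*} [AddCommGroup W] [Module (ZMod 2) W]
    (M : Matroid α) (E : Set α) (v : α → W) : Prop :=
  M.E = E ∧ ∀ I ⊆ E, (M.Indep I ↔ LinearIndependent (ZMod 2) (fun x : I => v x))

/-- Isomorphism of matroids: a bijection of ground sets preserving independence. -/
def MatroidIso {α β : Type*} (M : Matroid α) (N : Matroid β) : Prop :=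
  ∃ e : M.E ≃ N.E, ∀ I : Set M.E,
    (M.Indep (Subtype.val '' I) ↔ N.Indep (Subtype.val '' (e '' I)))

/-- The incidence vector of an edge, over GF(2). -/
noncomputable def incVec {V : Type*} (e : Sym2 V) : V → ZMod 2 :=
  fun v => if v ∈ e then 1 else 0

/-- `M` is the cycle matroid of the graph `G`, i.e. the binary matroid on the edge set of `G`
represented by the GF(2) incidence vectors of the edges. -/
def IsCycleMatroidOf {V : Type*} (M : Matroid (Sym2 V)) (G : SimpleGraph V) : Prop :=
  IsBinRepOn M G.edgeSet incVec

/-- Deletion of a set of elements from a matroid. -/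
def mDel {α : Type*} (M : Matroid α) (D : Set α) : Matroid α := M ↾ (M.E \ D)

/-- Contraction of a set of elements in a matroid. -/
def mCon {α : Type*} (M : Matroid α) (C : Set α) : Matroid α := (mDel M✶ C)✶

/-- A circuit of a matroid: a minimal dependent set. -/
def mCircuit {α : Type*} (M : Matroid α) (C : Set α) : Prop :=
  C ⊆ M.E ∧ ¬ M.Indep C ∧ ∀ x ∈ C, M.Indep (C \ {x})

/-- A cocircuit of a matroid: a circuit of the dual. -/
def mCocircuit {α : Type*} (M : Matroid α) (C : Set α) : Prop := mCircuit M✶ C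

/-- The rank of a set in a matroid: the supremum of cardinalities of independent subsets. -/
noncomputable def mRk {α : Type*} (M : Matroid α) (X : Set α) : ℕ :=
  sSup (Set.ncard '' {I | I ⊆ X ∧ M.Indep I})

/-- A `k`-separation of a matroid. -/
def mKSep {α : Type*} (M : Matroid α) (k : ℕ) (X Y : Set α) : Prop :=
  Disjoint X Y ∧ X ∪ Y = M.E ∧ k ≤ X.ncard ∧ k ≤ Y.ncard ∧
    mRk M X + mRk M Y + 1 ≤ mRk M M.E + k

/-- A matroid is `3`-connected if it has no 1- or 2-separations. -/
def mThreeConnected {α : Type*} (M : Matroid α) : Prop :=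
  (∀ X Y, ¬ mKSep M 1 X Y) ∧ (∀ X Y, ¬ mKSep M 2 X Y)

/-- A matroid is internally 4-connected if it is 3-connected and
every 3-separation has a side of size exactly 3. -/
def mInternally4 {α : Type*} (M : Matroid α) : Prop :=
  mThreeConnected M ∧ ∀ X Y, mKSep M 3 X Y → min X.ncard Y.ncard = 3

/-- A matroid is binary if it is representable over GF(2). -/
def mBinary {α : Type*} (M : Matroid α) : Prop :=
  ∃ (n : ℕ) (v : α → (Fin n → ZMod 2)), IsBinRepOn M M.E v

/-- `M` is the uniform matroid of rank `r` on all of `α`. -/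
def mUniformOf {α : Type*} (M : Matroid α) (r : ℕ) : Prop :=
  M.E = univ ∧ ∀ I : Set α, (M.Indep I ↔ I.ncard ≤ r)

/-- The points of the binary projective space of rank 4, `PG(3,2)`. -/
abbrev PGpt (n : ℕ) := {v : Fin n → ZMod 2 // v ≠ 0}

/-- The quartic Möbius ladder on `2n+1` vertices. -/
def qml (n : ℕ) : SimpleGraph (ZMod (2 * n + 1)) :=
  SimpleGraph.circulantGraph {1, (n : ZMod (2 * n + 1))}

/-- The cubic Möbius ladder on `2n` vertices. -/
def cml (n : ℕ) : SimpleGraph (ZMod (2 * n)) :=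
  SimpleGraph.circulantGraph {1, (n : ZMod (2 * n))}

/-!
Since `r(M) + r(M*) = 9`, one of `M` and `M*` has rank at most `4`, and both are binary and
internally 4-connected; say `r(M) ≤ 4`. Then `M` consists of nine of the fifteen points of
`PG(3, 2)`. If four of the six missing points summed to zero, they would be the complement of the
union of two hyperplanes, which would split the nine points into parts of size at least four with
total rank at most `6`. Hence the missing points form a Sidon set, whose fifteen pair sums exhaust
the points of `PG(3, 2)`; in particular each missing point is a sum of two others, so the missing
points form two disjoint lines `{x₀, x₁, x₂}` and `{y₀, y₁, y₂}`, and the nine points are the sums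
of a point of one and a point of the other. Arranged as `x (i + j) + y (i - j)`, they form a
`3 × 3` grid whose rows and columns sum to zero. As the grid spans a space of dimension `4`, its
linear relations are exactly the coefficient matrices `a i + b j`, that is, the row space of the
incidence matrix of `K_{3,3}`, so `M*` is `M(K_{3,3})`.
-/

section Connectivity

variable {α β : Type*} {M : Matroid α} {N : Matroid β} {X Y : Set α} {x y : α} {k : ℕ}

lemma coe_mRk (M : Matroid α) [M.Finite] (X : Set α) : (mRk M X : ℕ∞) = M.eRk X := by
  obtain ⟨I, hI⟩ := M.exists_isBasis' X
  have hI_fin : I.Finite := M.ground_finite.subset hI.indep.subset_ground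
  have h_greatest : IsGreatest (Set.ncard '' {J | J ⊆ X ∧ M.Indep J}) I.ncard := by
    refine ⟨⟨I, ⟨hI.subset, hI.indep⟩, rfl⟩, ?_⟩
    rintro _ ⟨J, ⟨hJX, hJ⟩, rfl⟩
    have hJ_fin : J.Finite := M.ground_finite.subset hJ.subset_ground
    have hJI : J.encard ≤ I.encard := by
      rw [← hI.eRk_eq_encard, ← hJ.eRk_eq_encard]
      exact M.eRk_mono hJX
    rwa [← hJ_fin.cast_ncard_eq, ← hI_fin.cast_ncard_eq, Nat.cast_le] at hJI
  rw [mRk, h_greatest.csSup_eq, hI.eRk_eq_encard, hI_fin.cast_ncard_eq]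

lemma mRk_mono (M : Matroid α) [M.Finite] (hXY : X ⊆ Y) : mRk M X ≤ mRk M Y := by
  rw [← Nat.cast_le (α := ℕ∞), coe_mRk, coe_mRk]
  exact M.eRk_mono hXY

lemma mRk_empty (M : Matroid α) [M.Finite] : mRk M ∅ = 0 := by
  rw [← Nat.cast_inj (R := ℕ∞), coe_mRk]
  simp

lemma mRk_dual_add_mRk_ground (M : Matroid α) [M.Finite] (hX : X ⊆ M.E) :
    mRk M✶ X + mRk M M.E = mRk M (M.E \ X) + X.ncard := by
  rw [← Nat.cast_inj (R := ℕ∞)]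
  push_cast [coe_mRk, (M.ground_finite.subset hX).cast_ncard_eq, eRk_ground]
  exact M.eRk_dual_add_eRank X hX

lemma mRk_ground_add_mRk_dual_ground (M : Matroid α) [M.Finite] :
    mRk M M.E + mRk M✶ M✶.E = M.E.ncard := by
  have h := mRk_dual_add_mRk_ground M subset_rfl
  rw [Set.sdiff_self, mRk_empty] at h
  rw [dual_ground]
  omega

lemma mKSep.dual [M.Finite] (h : mKSep M k X Y) : mKSep M✶ k X Y := by
  obtain ⟨h_disj, h_union, hkX, hkY, h_rk⟩ := h
  refine ⟨h_disj, h_union, hkX, hkY, ?_⟩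
  have hXE : M.E \ X = Y := by rw [← h_union, union_sdiff_cancel_left h_disj.inter_eq.subset]
  have hYE : M.E \ Y = X := by rw [← h_union, union_sdiff_cancel_right h_disj.inter_eq.subset]
  have hX := mRk_dual_add_mRk_ground M (h_union ▸ subset_union_left : X ⊆ M.E)
  have hY := mRk_dual_add_mRk_ground M (h_union ▸ subset_union_right : Y ⊆ M.E)
  have hE := mRk_ground_add_mRk_dual_ground M
  have h_card : X.ncard + Y.ncard = M.E.ncard := by
    rw [← hXE, add_comm,
      ncard_sdiff_add_ncard_of_subset (h_union ▸ subset_union_left) M.ground_finite]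
  rw [hXE] at hX
  rw [hYE] at hY
  omega

lemma mInternally4.dual [M.Finite] (h : mInternally4 M) : mInternally4 M✶ := by
  have undual {k X Y} (hsep : mKSep M✶ k X Y) : mKSep M k X Y := by simpa using hsep.dual
  exact ⟨⟨fun X Y hsep ↦ h.1.1 X Y (undual hsep), fun X Y hsep ↦ h.1.2 X Y (undual hsep)⟩,
    fun X Y hsep ↦ h.2 X Y (undual hsep)⟩

lemma mInternally4.mRk_ground_add_three_le (h : mInternally4 M) (h_disj : Disjoint X Y)
    (h_union : X ∪ Y = M.E) (hX : 4 ≤ X.ncard) (hY : 4 ≤ Y.ncard) :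
    mRk M M.E + 3 ≤ mRk M X + mRk M Y := by
  by_contra! h_lt
  have := h.2 X Y ⟨h_disj, h_union, by omega, by omega, by omega⟩
  omega

lemma mThreeConnected.indep_pair [M.Finite] (h : mThreeConnected M) (h4 : 4 ≤ M.E.ncard)
    (hx : x ∈ M.E) (hy : y ∈ M.E) (hxy : x ≠ y) : M.Indep {x, y} := by
  have h_sub : {x, y} ⊆ M.E := pair_subset hx hy
  have h_pair : ({x, y} : Set α).ncard = 2 := ncard_pair hxy
  have h_card := ncard_sdiff_add_ncard_of_subset h_sub M.ground_finite
  have h_rest := mRk_mono M (sdiff_subset : M.E \ {x, y} ⊆ M.E)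
  have h_not_sep := h.2 {x, y} (M.E \ {x, y})
  simp only [mKSep, disjoint_sdiff_right, union_sdiff_cancel h_sub, true_and] at h_not_sep
  have h_rk : 2 ≤ mRk M {x, y} := by
    by_contra! h_lt
    exact h_not_sep ⟨by omega, by omega, by omega⟩
  rw [indep_iff_eRk_eq_encard_of_finite (toFinite _), encard_pair hxy]
  refine le_antisymm ((M.eRk_le_encard _).trans (encard_pair hxy).le) ?_
  rw [← coe_mRk]
  exact_mod_cast h_rk

lemma matroidIso_iff_exists_mapEquiv_eq : MatroidIso M N ↔
    ∃ e : M.E ≃ N.E, (M.restrictSubtype M.E).mapEquiv e = N.restrictSubtype N.E := by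
  refine exists_congr fun e ↦ ⟨fun h ↦ ext_indep (by simp) fun I _ ↦ ?_, fun h I ↦ ?_⟩
  · have := h (e.symm '' I)
    simpa [mapEquiv_indep_iff] using this
  · have h_indep := mapEquiv_indep_iff (M := M.restrictSubtype M.E) (f := e) (I := e '' I)
    rw [h] at h_indep
    simpa using h_indep.symm

lemma MatroidIso.dual (h : MatroidIso M N) : MatroidIso M✶ N✶ := by
  rw [matroidIso_iff_exists_mapEquiv_eq] at h ⊢
  obtain ⟨e, he⟩ := h
  refine ⟨e, ?_⟩
  change (M✶.restrictSubtype M.E).mapEquiv e = N✶.restrictSubtype N.E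
  rw [← restrictSubtype_dual, ← restrictSubtype_dual, ← he, mapEquiv_eq_map, mapEquiv_eq_map,
    map_dual]

end Connectivity

section Representation

variable {K α β ι κ V W : Type*} [Field K] [AddCommGroup V] [Module K V] [AddCommGroup W]
  [Module K W] {M : Matroid α} {N : Matroid β} {g : ι ↪ α} {h : ι ↪ β} {v : ι → V} {w : ι → W}

/-- A linear representation over `K` of a matroid whose ground set is labelled by `ι`: the element
with label `i` is represented by the vector `v i`. -/
structure IsLabelledRep (K : Type*) {α ι V : Type*} [Field K] [AddCommGroup V] [Module K V]
    (M : Matroid α) (g : ι ↪ α) (v : ι → V) : Prop where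
  range_eq : range g = M.E
  indep_image_iff (I : Set ι) : M.Indep (g '' I) ↔ LinearIndepOn K v I

lemma IsBinRepOn.isLabelledRep {V : Type*} [AddCommGroup V] [Module (ZMod 2) V] {E : Set α}
    {u : α → V} (hM : IsBinRepOn M E u) (hg : range g = E) :
    IsLabelledRep (ZMod 2) M g (u ∘ g) where
  range_eq := hg.trans hM.1.symm
  indep_image_iff I := (hM.2 _ ((image_subset_range g I).trans hg.subset)).trans
    ⟨fun hI ↦ LinearIndepOn.comp_of_image hI g.injective.injOn, LinearIndepOn.image_of_comp g u⟩

namespace IsLabelledRep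

lemma relabel (hv : IsLabelledRep K M g v) (e : κ ≃ ι) :
    IsLabelledRep K M (e.toEmbedding.trans g) (v ∘ e) where
  range_eq := (e.surjective.range_comp g).trans hv.range_eq
  indep_image_iff I := by
    rw [linearIndepOn_equiv, ← hv.indep_image_iff, image_image]
    rfl

lemma comp_linearMap_iff {f : V →ₗ[K] W} (hf : Function.Injective f) :
    IsLabelledRep K M g (f ∘ v) ↔ IsLabelledRep K M g v := by
  have h_indep (I : Set ι) := f.linearIndepOn_iff_of_injOn (s := I) (v := v) hf.injOn
  exact ⟨fun hM ↦ ⟨hM.range_eq, fun I ↦ (hM.indep_image_iff I).trans (h_indep I)⟩,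
    fun hM ↦ ⟨hM.range_eq, fun I ↦ (hM.indep_image_iff I).trans (h_indep I).symm⟩⟩

lemma matroidIso (hM : IsLabelledRep K M g v) (hN : IsLabelledRep K N h v) : MatroidIso M N := by
  let eM : ι ≃ M.E := (Equiv.ofInjective g g.injective).trans (Equiv.setCongr hM.range_eq)
  let eN : ι ≃ N.E := (Equiv.ofInjective h h.injective).trans (Equiv.setCongr hN.range_eq)
  refine ⟨eM.symm.trans eN, fun I ↦ ?_⟩
  obtain ⟨J, rfl⟩ := eM.surjective.image_surjective I
  have hM_image : Subtype.val '' (eM '' J) = g '' J := image_image ..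
  have hN_image : Subtype.val '' ((eM.symm.trans eN) '' (eM '' J)) = h '' J := by
    simp [image_image, eN]
  rw [hM_image, hN_image, hM.indep_image_iff, hN.indep_image_iff]

lemma mem_ground (hv : IsLabelledRep K M g v) (i : ι) : g i ∈ M.E :=
  hv.range_eq ▸ mem_range_self i

lemma image_subset_ground (hv : IsLabelledRep K M g v) (X : Set ι) : g '' X ⊆ M.E :=
  hv.range_eq ▸ image_subset_range g X

lemma ground_diff_image (hv : IsLabelledRep K M g v) (X : Set ι) : M.E \ g '' X = g '' Xᶜ := by
  rw [← hv.range_eq, range_sdiff_image g.injective]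

lemma exists_isBasis_image (hv : IsLabelledRep K M g v) (X : Set ι) :
    ∃ J, M.IsBasis (g '' J) (g '' X) ∧ LinearIndepOn K v J ∧
      Submodule.span K (v '' J) = Submodule.span K (v '' X) := by
  obtain ⟨J, hJX, -, hXJ, hJ⟩ :=
    exists_linearIndepOn_extension (linearIndepOn_empty K v) (empty_subset X)
  refine ⟨J, ?_, hJ, le_antisymm (Submodule.span_mono (image_mono hJX))
    (Submodule.span_le.2 hXJ)⟩
  refine ((hv.indep_image_iff J).2 hJ).isBasis_of_forall_insert (image_mono hJX) ?_
  rintro _ ⟨⟨i, hiX, rfl⟩, hiJ⟩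
  refine ⟨?_, insert_subset (hv.mem_ground i) (hv.image_subset_ground J)⟩
  rw [← image_insert_eq, hv.indep_image_iff, linearIndepOn_insert_iff]
  exact fun h_insert ↦ hiJ (mem_image_of_mem g (h_insert.2 (hXJ (mem_image_of_mem v hiX))))

lemma mem_closure_image_iff (hv : IsLabelledRep K M g v) {i : ι} {X : Set ι} :
    g i ∈ M.closure (g '' X) ↔ v i ∈ Submodule.span K (v '' X) := by
  obtain ⟨J, h_basis, hJ, h_span⟩ := hv.exists_isBasis_image X
  rw [← h_basis.closure_eq_closure, h_basis.indep.mem_closure_iff', ← image_insert_eq,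
    hv.indep_image_iff, linearIndepOn_insert_iff, g.injective.mem_set_image, ← h_span]
  simp only [hv.mem_ground i, hJ, true_and]
  exact ⟨fun h_mem ↦ by_contra fun h_notMem ↦
    h_notMem (Submodule.subset_span (mem_image_of_mem v (h_mem fun h' ↦ (h_notMem h').elim))),
    fun h_mem h_insert ↦ h_insert h_mem⟩

lemma mRk_image [M.Finite] (hv : IsLabelledRep K M g v) (X : Set ι) :
    mRk M (g '' X) = Module.finrank K (Submodule.span K (v '' X)) := by
  obtain ⟨J, h_basis, hJ, h_span⟩ := hv.exists_isBasis_image X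
  have h_rk : (mRk M (g '' X) : ℕ∞) = (g '' J).ncard := by
    rw [coe_mRk, h_basis.eRk_eq_encard,
      (M.ground_finite.subset h_basis.indep.subset_ground).cast_ncard_eq]
  rw [← h_span, Module.finrank, rank_span_set hJ.id_image, Nat.cast_inj.1 h_rk,
    ncard_image_of_injective _ g.injective, ← hJ.injOn.ncard_image]
  rfl

lemma mRk_ground [M.Finite] (hv : IsLabelledRep K M g v) :
    mRk M M.E = Module.finrank K (Submodule.span K (range v)) := by
  rw [← hv.range_eq, ← image_univ, hv.mRk_image, image_univ]

lemma injective_of_mThreeConnected [M.Finite] (hv : IsLabelledRep K M g v)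
    (h : mThreeConnected M) (h4 : 4 ≤ M.E.ncard) : Function.Injective v := by
  intro i j hij
  by_contra h_ne
  have h_pair := h.indep_pair h4 (hv.mem_ground i) (hv.mem_ground j) (g.injective.ne h_ne)
  rw [← image_pair, hv.indep_image_iff] at h_pair
  exact h_ne (h_pair.injOn (by simp) (by simp) hij)

lemma ne_zero_of_mThreeConnected [M.Finite] (hv : IsLabelledRep K M g v)
    (h : mThreeConnected M) (h4 : 4 ≤ M.E.ncard) (i : ι) : v i ≠ 0 := by
  obtain ⟨y, hy, hyi⟩ := exists_ne_of_one_lt_ncard (by omega : 1 < M.E.ncard) (g i)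
  have h_pair := h.indep_pair h4 (hv.mem_ground i) hy hyi.symm
  have h_single : M.Indep (g '' {i}) := by
    rw [image_singleton]
    exact h_pair.subset (by simp)
  exact ((hv.indep_image_iff _).1 h_single).ne_zero (mem_singleton i)

lemma finrank_add_three_le [M.Finite] (hv : IsLabelledRep K M g v) (h : mInternally4 M)
    {X : Set ι} (hX : 4 ≤ X.ncard) (hX' : 4 ≤ Xᶜ.ncard) :
    mRk M M.E + 3 ≤ Module.finrank K (Submodule.span K (v '' X)) +
      Module.finrank K (Submodule.span K (v '' Xᶜ)) := by
  rw [← hv.mRk_image, ← hv.mRk_image]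
  refine h.mRk_ground_add_three_le (disjoint_compl_right.image g.injective.injOn
    (subset_univ _) (subset_univ _)) ?_ ?_ ?_
  · rw [← image_union, union_compl_self, image_univ, hv.range_eq]
  · rwa [ncard_image_of_injective _ g.injective]
  · rwa [ncard_image_of_injective _ g.injective]

lemma dual_indep_image_iff (hv : IsLabelledRep K M g v) (I : Set ι) :
    M✶.Indep (g '' I) ↔ ∀ i ∈ I, v i ∈ Submodule.span K (v '' Iᶜ) := by
  rw [← Coindep, coindep_iff_closure_compl_eq_ground (hv.image_subset_ground I),
    hv.ground_diff_image]
  refine ⟨fun h_closure i _ ↦ hv.mem_closure_image_iff.1 (h_closure ▸ hv.mem_ground i),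
    fun h_span ↦ (M.closure_subset_ground _).antisymm ?_⟩
  rw [← hv.range_eq]
  rintro _ ⟨i, rfl⟩
  rw [hv.mem_closure_image_iff]
  by_cases hi : i ∈ I
  exacts [h_span i hi, Submodule.subset_span (mem_image_of_mem v hi)]

end IsLabelledRep

lemma linearIndepOn_iff_exists_dual {I : Set ι} : LinearIndepOn K w I ↔
    ∀ i ∈ I, ∃ φ : Module.Dual K W, φ (w i) ≠ 0 ∧ ∀ j ∈ I \ {i}, φ (w j) = 0 := by
  rw [linearIndepOn_iff_notMem_span]
  refine forall₂_congr fun i _ ↦ ⟨fun h_notMem ↦ ?_, ?_⟩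
  · obtain ⟨φ, hφ, h_le⟩ := Submodule.exists_le_ker_of_notMem h_notMem
    exact ⟨φ, hφ, fun j hj ↦ h_le (Submodule.subset_span (mem_image_of_mem w hj))⟩
  · rintro ⟨φ, hφ, h_zero⟩ h_mem
    have h_le : Submodule.span K (w '' (I \ {i})) ≤ φ.ker :=
      Submodule.span_le.2 (image_subset_iff.2 h_zero)
    exact hφ (h_le h_mem)

variable [Fintype ι]

lemma mem_span_image_compl_iff_exists_relation {I : Set ι} {i : ι} (hi : i ∈ I) :
    v i ∈ Submodule.span K (v '' Iᶜ) ↔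
      ∃ k : ι → K, ∑ j, k j • v j = 0 ∧ k i ≠ 0 ∧ ∀ j ∈ I \ {i}, k j = 0 := by
  rw [Finsupp.mem_span_image_iff_linearCombination]
  constructor
  · rintro ⟨l, hl, h_eq⟩
    have hl_zero (j : ι) (hj : j ∈ I) : l j = 0 := Finsupp.notMem_support_iff.1 fun h ↦ hl h hj
    refine ⟨⇑l - Pi.single i 1, ?_, by simp [hl_zero i hi], fun j hj ↦ ?_⟩
    · rw [Finsupp.linearCombination_apply, Finsupp.sum_fintype _ _ (by simp)] at h_eq
      simpa [sub_smul, Pi.single_apply, sub_eq_zero] using h_eq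
    · simp [hl_zero j hj.1, Pi.single_eq_of_ne hj.2]
  · rintro ⟨k, hk, hki, h_zero⟩
    rw [← Finsupp.mem_span_image_iff_linearCombination, ← Submodule.smul_mem_iff _ hki,
      eq_neg_of_add_eq_zero_left ((Finset.add_sum_erase _ _ (Finset.mem_univ i)).trans hk)]
    refine neg_mem (sum_mem fun j hj ↦ ?_)
    by_cases hjI : j ∈ I
    · simp [h_zero j ⟨hjI, Finset.ne_of_mem_erase hj⟩]
    · exact Submodule.smul_mem _ _ (Submodule.subset_span (mem_image_of_mem v hjI))

/-- The families `v` and `w` are dual if the linear relations among the vectors `v i` are exactly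
the tuples of values `φ (w i)` of linear functionals: the row space of `w` is the orthogonal
complement of the row space of `v`. -/
def AreDualFamilies (K : Type*) {ι V W : Type*} [Fintype ι] [Field K] [AddCommGroup V]
    [Module K V] [AddCommGroup W] [Module K W] (v : ι → V) (w : ι → W) : Prop :=
  ∀ k : ι → K, ∑ i, k i • v i = 0 ↔ ∃ φ : Module.Dual K W, ∀ i, φ (w i) = k i

theorem IsLabelledRep.dual (hv : IsLabelledRep K M g v) (hvw : AreDualFamilies K v w) :
    IsLabelledRep K M✶ g w where
  range_eq := hv.range_eq
  indep_image_iff I := by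
    rw [hv.dual_indep_image_iff, linearIndepOn_iff_exists_dual]
    refine forall₂_congr fun i hi ↦ (mem_span_image_compl_iff_exists_relation hi).trans ⟨?_, ?_⟩
    · rintro ⟨k, hk, hki, h_zero⟩
      obtain ⟨φ, hφ⟩ := (hvw k).1 hk
      exact ⟨φ, by rwa [hφ], fun j hj ↦ (hφ j).trans (h_zero j hj)⟩
    · rintro ⟨φ, hφi, h_zero⟩
      exact ⟨fun j ↦ φ (w j), (hvw _).2 ⟨φ, fun _ ↦ rfl⟩, hφi, h_zero⟩

lemma areDualFamilies_proj_domRestrict (v : ι → V) :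
    AreDualFamilies K v fun i ↦
      (LinearMap.proj i).domRestrict (Fintype.linearCombination K v).ker := by
  intro k
  rw [← Fintype.linearCombination_apply, ← LinearMap.mem_ker]
  constructor
  · exact fun hk ↦ ⟨Module.Dual.eval K _ ⟨k, hk⟩, fun _ ↦ rfl⟩
  · rintro ⟨φ, hφ⟩
    obtain ⟨x, rfl⟩ := (Module.evalEquiv K _).surjective φ
    obtain rfl : x.1 = k := funext hφ
    exact x.2

end Representation

section Sidon

variable {V : Type*} [AddCommGroup V]

/-- A Sidon set in a vector space over `ZMod 2`: no four distinct elements sum to zero. -/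
def IsSidon (T : Set V) : Prop :=
  ∀ ⦃p⦄, p ∈ T → ∀ ⦃q⦄, q ∈ T → ∀ ⦃r⦄, r ∈ T → p ≠ q → p ≠ r → q ≠ r → p + q + r ∉ T

/-- A line of the binary projective space of `V`, as a set of three vectors summing to zero. -/
structure IsLine (L : Finset V) : Prop where
  card_eq : L.card = 3
  sum_eq_zero : ∑ x ∈ L, x = 0

lemma IsLine.exists_enumeration {L : Finset V} (hL : IsLine L) :
    ∃ x : Fin 3 → V, Function.Injective x ∧ (∀ i, x i ∈ L) ∧ ∑ i, x i = 0 := by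
  let e := (L.equivFinOfCardEq hL.card_eq).symm
  refine ⟨fun i ↦ e i, Subtype.val_injective.comp e.injective, fun i ↦ (e i).2, ?_⟩
  rw [e.sum_comp fun z : L ↦ (z : V), Finset.sum_coe_sort L fun z ↦ z, hL.sum_eq_zero]

variable [Module (ZMod 2) V]

lemma add_eq_zero_iff_eq_of_zmod_two {p q : V} : p + q = 0 ↔ p = q := by
  rw [add_eq_zero_iff_eq_neg, ZModModule.neg_eq_self]

lemma isLine_insert_add_pair {p q : V} (hp : p ≠ 0) (hq : q ≠ 0) (hpq : p ≠ q) :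
    IsLine {p + q, p, q} where
  card_eq := Finset.card_eq_three.2 ⟨_, _, _, by simpa using hq, by simpa using hp, hpq, rfl⟩
  sum_eq_zero := by
    rw [Finset.sum_insert (by simp [hp, hq]), Finset.sum_pair hpq, ZModModule.add_self]

namespace IsSidon

variable {T : Set V} {L L' : Finset V}

lemma injOn_sum_pair (hT : IsSidon T) :
    InjOn (fun s : Finset V ↦ ∑ x ∈ s, x) {s | ↑s ⊆ T ∧ s.card = 2} := by
  rintro s ⟨hsT, hs⟩ t ⟨htT, ht⟩ h_sum
  obtain ⟨p, q, hpq, rfl⟩ := Finset.card_eq_two.1 hs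
  obtain ⟨r, s, hrs, rfl⟩ := Finset.card_eq_two.1 ht
  simp only [Finset.coe_pair, pair_subset_iff] at hsT htT
  simp only [Finset.sum_pair hpq, Finset.sum_pair hrs] at h_sum
  by_cases hpr : p = r
  · rw [hpr, add_right_inj] at h_sum
    rw [hpr, h_sum]
  by_cases hqr : q = r
  · rw [hqr, add_comm, add_right_inj] at h_sum
    rw [hqr, h_sum, Finset.pair_comm]
  have h_eq : p + q + r = s := by
    rw [h_sum, add_right_comm, ZModModule.add_self, zero_add]
  exact (hT hsT.1 hsT.2 htT.1 hpq hpr hqr (h_eq ▸ htT.2)).elim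

lemma eq_of_mem_lines (hT : IsSidon T) (hL : IsLine L) (hL' : IsLine L') (hLT : ↑L ⊆ T)
    (hLT' : ↑L' ⊆ T) {t : V} (ht : t ∈ L) (ht' : t ∈ L') : L = L' := by
  have sum_erase {L : Finset V} (hL : IsLine L) (ht : t ∈ L) : ∑ x ∈ L.erase t, x = t := by
    rw [← add_eq_zero_iff_eq_of_zmod_two, Finset.sum_erase_add _ _ ht, hL.sum_eq_zero]
  have card_erase {L : Finset V} (hL : IsLine L) (ht : t ∈ L) : (L.erase t).card = 2 := by
    rw [Finset.card_erase_of_mem ht, hL.card_eq]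
  have h_erase : L.erase t = L'.erase t := by
    refine hT.injOn_sum_pair ⟨?_, card_erase hL ht⟩ ⟨?_, card_erase hL' ht'⟩
      ((sum_erase hL ht).trans (sum_erase hL' ht').symm)
    · exact (Finset.coe_subset.2 (L.erase_subset t)).trans hLT
    · exact (Finset.coe_subset.2 (L'.erase_subset t)).trans hLT'
  rw [← Finset.insert_erase ht, h_erase, Finset.insert_erase ht']

lemma exists_pair_sum_eq [Finite V] (hT : IsSidon T)
    (h_card : Nat.card V ≤ T.ncard.choose 2 + 1) {u : V} (hu : u ≠ 0) :
    ∃ p ∈ T, ∃ q ∈ T, p ≠ q ∧ p + q = u := by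
  have := Fintype.ofFinite V
  have h_surj := Finset.surj_on_of_inj_on_of_card_le (s := T.toFinset.powersetCard 2)
    (t := Finset.univ.erase (0 : V)) (fun s _ ↦ ∑ x ∈ s, x) ?_ ?_ ?_ u (by simp [hu])
  · obtain ⟨s, hs, rfl⟩ := h_surj
    obtain ⟨hsT, hs⟩ := Finset.mem_powersetCard.1 hs
    obtain ⟨p, q, hpq, rfl⟩ := Finset.card_eq_two.1 hs
    simp only [Finset.insert_subset_iff, Finset.singleton_subset_iff, mem_toFinset] at hsT
    exact ⟨p, hsT.1, q, hsT.2, hpq, (Finset.sum_pair (f := id) hpq).symm⟩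
  · intro s hs
    obtain ⟨p, q, hpq, rfl⟩ := Finset.card_eq_two.1 (Finset.mem_powersetCard.1 hs).2
    simpa [Finset.sum_pair hpq, add_eq_zero_iff_eq_of_zmod_two] using hpq
  · intro s t hs ht h_sum
    rw [Finset.mem_powersetCard, subset_toFinset] at hs ht
    exact hT.injOn_sum_pair hs ht h_sum
  · rw [Finset.card_powersetCard, Finset.card_erase_of_mem (Finset.mem_univ _), Finset.card_univ,
      ← Nat.card_eq_fintype_card, ← ncard_eq_toFinset_card']
    omega

lemma exists_line [Finite V] (hT : IsSidon T) (h_card : Nat.card V ≤ T.ncard.choose 2 + 1)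
    (h_zero : 0 ∉ T) {t : V} (ht : t ∈ T) : ∃ L, IsLine L ∧ ↑L ⊆ T ∧ t ∈ L := by
  have ne_zero {x : V} (hx : x ∈ T) : x ≠ 0 := ne_of_mem_of_not_mem hx h_zero
  obtain ⟨p, hp, q, hq, hpq, rfl⟩ := hT.exists_pair_sum_eq h_card (ne_zero ht)
  exact ⟨{p + q, p, q}, isLine_insert_add_pair (ne_zero hp) (ne_zero hq) hpq,
    by simp [insert_subset_iff, hp, hq, ht], by simp⟩

lemma exists_disjoint_lines [Finite V] (hT : IsSidon T)
    (h_card : Nat.card V ≤ T.ncard.choose 2 + 1) (h_zero : 0 ∉ T) (h_lt : 3 < T.ncard) :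
    ∃ L L' : Finset V, IsLine L ∧ IsLine L' ∧ ↑L ⊆ T ∧ ↑L' ⊆ T ∧ Disjoint L L' := by
  obtain ⟨t, ht⟩ : T.Nonempty := (ncard_pos (toFinite T)).1 (by omega)
  obtain ⟨L, hL, hLT, -⟩ := hT.exists_line h_card h_zero ht
  obtain ⟨t', ht', ht'L⟩ : ∃ t' ∈ T, t' ∉ (L : Set V) :=
    exists_mem_notMem_of_ncard_lt_ncard (by rwa [ncard_coe_finset, hL.card_eq])
  obtain ⟨L', hL', hLT', ht'L'⟩ := hT.exists_line h_card h_zero ht'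
  refine ⟨L, L', hL, hL', hLT, hLT', Finset.disjoint_left.2 fun x hx hx' ↦ ht'L ?_⟩
  rw [hT.eq_of_mem_lines hL hL' hLT hLT' hx hx']
  exact ht'L'

lemma add_notMem_of_mem_lines (hT : IsSidon T) (hL : IsLine L) (hL' : IsLine L') (hLT : ↑L ⊆ T)
    (hLT' : ↑L' ⊆ T) (h_disj : Disjoint L L') (h_zero : 0 ∉ T) {x y : V} (hx : x ∈ L)
    (hy : y ∈ L') : x + y ∉ T := by
  intro h_mem
  have ne_zero {z : V} (hz : z ∈ T) : z ≠ 0 := ne_of_mem_of_not_mem hz h_zero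
  have h_line : IsLine {x + y, x, y} := isLine_insert_add_pair (ne_zero (hLT hx))
    (ne_zero (hLT' hy)) (Finset.disjoint_iff_ne.1 h_disj x hx y hy)
  have h_line_sub : ↑({x + y, x, y} : Finset V) ⊆ T := by
    simp [insert_subset_iff, h_mem, hLT hx, hLT' hy]
  have h_eq := hT.eq_of_mem_lines hL h_line hLT h_line_sub hx (by simp)
  have h_eq' := hT.eq_of_mem_lines hL' h_line hLT' h_line_sub hy (by simp)
  exact Finset.disjoint_left.1 h_disj hx (h_eq'.trans h_eq.symm ▸ hx)

lemma eq_and_eq_of_add_eq_add (hT : IsSidon T) (hLT : ↑L ⊆ T) (hLT' : ↑L' ⊆ T)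
    (h_disj : Disjoint L L') {x x' y y' : V} (hx : x ∈ L) (hx' : x' ∈ L) (hy : y ∈ L')
    (hy' : y' ∈ L') (h_add : x + y = x' + y') : x = x' ∧ y = y' := by
  have ne_of_mem {a b : V} (ha : a ∈ L) (hb : b ∈ L') : a ≠ b :=
    Finset.disjoint_iff_ne.1 h_disj a ha b hb
  have h_pair : ({x, y} : Finset V) = {x', y'} := by
    refine hT.injOn_sum_pair ⟨?_, Finset.card_pair (ne_of_mem hx hy)⟩
      ⟨?_, Finset.card_pair (ne_of_mem hx' hy')⟩ ?_
    · simp [insert_subset_iff, hLT hx, hLT' hy]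
    · simp [insert_subset_iff, hLT hx', hLT' hy']
    · simpa [Finset.sum_pair (ne_of_mem hx hy), Finset.sum_pair (ne_of_mem hx' hy')] using h_add
  have hxx' : x = x' := by
    have h_mem : x ∈ ({x', y'} : Finset V) := h_pair ▸ Finset.mem_insert_self x {y}
    simpa [ne_of_mem hx hy'] using h_mem
  exact ⟨hxx', by rwa [hxx', add_right_inj] at h_add⟩

end IsSidon

end Sidon

section Hyperplanes

variable {K ι V : Type*} {v : ι → V}

lemma ncard_compl_insert_zero_range [Zero V] [Finite V] (hv : Function.Injective v)
    (hv0 : ∀ i, v i ≠ 0) :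
    (insert 0 (range v))ᶜ.ncard + Nat.card ι + 1 = Nat.card V := by
  have : Finite ι := .of_injective v hv
  rw [← ncard_add_ncard_compl (insert 0 (range v)), ncard_insert_of_notMem (by simpa using hv0),
    ncard_range_of_injective hv]
  omega

lemma ncard_add_ncard_le_ncard_preimage_add [Zero V] [Finite V] [Finite ι] {H F : Set V}
    (hF : F ⊆ (insert 0 (range v))ᶜ) (hFH : Disjoint F H) :
    H.ncard + F.ncard ≤ (v ⁻¹' H).ncard + (insert 0 (range v))ᶜ.ncard + 1 := by
  have h_cover : H ∪ F ⊆ insert 0 (v '' (v ⁻¹' H) ∪ (insert 0 (range v))ᶜ) := by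
    rintro x (hx | hx)
    · by_cases hx' : x ∈ insert 0 (range v)
      · obtain rfl | ⟨i, rfl⟩ := hx'
        exacts [mem_insert _ _, .inr (.inl ⟨i, hx, rfl⟩)]
      · exact .inr (.inr hx')
    · exact .inr (.inr (hF hx))
  calc H.ncard + F.ncard = (H ∪ F).ncard := (ncard_union_eq hFH.symm).symm
    _ ≤ (insert 0 (v '' (v ⁻¹' H) ∪ (insert 0 (range v))ᶜ)).ncard := ncard_le_ncard h_cover
    _ ≤ (v '' (v ⁻¹' H) ∪ (insert 0 (range v))ᶜ).ncard + 1 := ncard_insert_le _ _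
    _ ≤ (v '' (v ⁻¹' H)).ncard + (insert 0 (range v))ᶜ.ncard + 1 := by
      gcongr
      exact ncard_union_le _ _
    _ ≤ (v ⁻¹' H).ncard + (insert 0 (range v))ᶜ.ncard + 1 := by
      gcongr
      exact ncard_image_le (toFinite _)

lemma le_finrank_add_finrank_of_cover [Field K] [AddCommGroup V] [Module K V]
    [Module.Finite K V] [Finite ι] {m n : ℕ}
    (h_sep : ∀ X : Set ι, m ≤ X.ncard → m ≤ Xᶜ.ncard → n ≤
      Module.finrank K (Submodule.span K (v '' X)) +
        Module.finrank K (Submodule.span K (v '' Xᶜ)))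
    (hι : 2 * m ≤ Nat.card ι) {P Q : Submodule K V} (hP : m ≤ (v ⁻¹' P).ncard)
    (hQ : m ≤ (v ⁻¹' Q).ncard) (h_cover : (v ⁻¹' Q)ᶜ ⊆ v ⁻¹' P) :
    n ≤ Module.finrank K P + Module.finrank K Q := by
  have hQ_compl := ncard_add_ncard_compl (v ⁻¹' Q)
  obtain ⟨X, hQX, hXP, hX⟩ := exists_subsuperset_card_eq h_cover (le_max_right m _)
    (max_le hP (ncard_le_ncard h_cover))
  have hX_compl := ncard_add_ncard_compl X
  have finrank_le {H : Submodule K V} {Y : Set ι} (hY : Y ⊆ v ⁻¹' H) :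
      Module.finrank K (Submodule.span K (v '' Y)) ≤ Module.finrank K H :=
    Submodule.finrank_mono (Submodule.span_le.2 (image_subset_iff.2 hY))
  exact (h_sep X (by omega) (by omega)).trans
    (add_le_add (finrank_le hXP) (finrank_le (compl_subset_comm.1 hQX)))

variable [AddCommGroup V] [Module (ZMod 2) V]

lemma linearIndependent_triple_of_zmod_two {p q r : V} (hp : p ≠ 0) (hq : q ≠ 0) (hr : r ≠ 0)
    (hpq : p ≠ q) (hpr : p ≠ r) (hqr : q ≠ r) (hpqr : p + q + r ≠ 0) :
    LinearIndependent (ZMod 2) ![p, q, r] := by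
  rw [Fintype.linearIndependent_iff]
  intro c hc
  simp only [Fin.sum_univ_three, Matrix.cons_val] at hc
  have zmod_two_cases (a : ZMod 2) : a = 0 ∨ a = 1 := by revert a; decide
  rcases zmod_two_cases (c 0) with h0 | h0 <;> rcases zmod_two_cases (c 1) with h1 | h1 <;>
    rcases zmod_two_cases (c 2) with h2 | h2 <;>
    simp_all [add_eq_zero_iff_eq_of_zmod_two, Fin.forall_fin_succ]

lemma exists_hyperplanes_compl_union_eq_of_basis (b : Module.Basis (Fin 4) (ZMod 2) V) :
    ∃ P Q : Submodule (ZMod 2) V, Module.finrank (ZMod 2) P = 3 ∧ Module.finrank (ZMod 2) Q = 3 ∧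
      ((P : Set V) ∪ Q)ᶜ = {b 1, b 2, b 3, b 1 + b 2 + b 3} := by
  have := b.finiteDimensional_of_finite
  have hV : Module.finrank (ZMod 2) V = 4 := by simp [Module.finrank_eq_card_basis b]
  let φ := b.coord 1 + b.coord 2 + b.coord 3
  let ψ := b.coord 0 + φ
  have hφ : φ ≠ 0 := fun h ↦ by simpa [φ] using LinearMap.congr_fun h (b 1)
  have hψ : ψ ≠ 0 := fun h ↦ by simpa [ψ, φ] using LinearMap.congr_fun h (b 1)
  have finrank_ker {f : Module.Dual (ZMod 2) V} (hf : f ≠ 0) :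
      Module.finrank (ZMod 2) f.ker = 3 := by
    have := Module.Dual.finrank_ker_add_one_of_ne_zero hf
    omega
  refine ⟨φ.ker, ψ.ker, finrank_ker hφ, finrank_ker hψ, ?_⟩
  have coord_cases : ∀ a₀ a₁ a₂ a₃ : ZMod 2, a₁ + a₂ + a₃ ≠ 0 ∧ a₀ + (a₁ + a₂ + a₃) ≠ 0 →
      a₀ = 0 ∧ (a₁ = 1 ∧ a₂ = 0 ∧ a₃ = 0 ∨ a₁ = 0 ∧ a₂ = 1 ∧ a₃ = 0 ∨
        a₁ = 0 ∧ a₂ = 0 ∧ a₃ = 1 ∨ a₁ = 1 ∧ a₂ = 1 ∧ a₃ = 1) := by decide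
  ext x
  simp only [mem_compl_iff, mem_union, SetLike.mem_coe, LinearMap.mem_ker, not_or,
    mem_insert_iff, mem_singleton_iff]
  constructor
  · intro hx
    have h_sum : b.coord 0 x • b 0 + b.coord 1 x • b 1 + b.coord 2 x • b 2 + b.coord 3 x • b 3 =
        x := by
      simpa only [Fin.sum_univ_four, b.coord_apply] using b.sum_repr x
    obtain ⟨h₀, ⟨h₁, h₂, h₃⟩ | ⟨h₁, h₂, h₃⟩ | ⟨h₁, h₂, h₃⟩ | ⟨h₁, h₂, h₃⟩⟩ :=
      coord_cases _ _ _ _ hx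
    all_goals
      rw [h₀, h₁, h₂, h₃] at h_sum
      simp [← h_sum]
  · rintro (rfl | rfl | rfl | rfl) <;> simp +decide [φ, ψ]

lemma exists_hyperplanes_compl_union_eq (hV : Module.finrank (ZMod 2) V = 4) {p q r : V}
    (h_indep : LinearIndependent (ZMod 2) ![p, q, r]) :
    ∃ P Q : Submodule (ZMod 2) V, Module.finrank (ZMod 2) P = 3 ∧ Module.finrank (ZMod 2) Q = 3 ∧
      ((P : Set V) ∪ Q)ᶜ = {p, q, r, p + q + r} := by
  obtain ⟨u, hu⟩ := exists_linearIndependent_cons_of_lt_finrank h_indep (by omega)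
  have h_planes := exists_hyperplanes_compl_union_eq_of_basis
    (basisOfLinearIndependentOfCardEqFinrank hu (by simp [hV]))
  simpa [Fin.cons] using h_planes

lemma ncard_insert_add_triple {p q r : V} (hpq : p ≠ q) (hpr : p ≠ r) (hqr : q ≠ r) :
    ({p, q, r, p + q + r} : Set V).ncard = 4 := by
  have h_mem : r ≠ p + q + r := by simpa [add_eq_zero_iff_eq_of_zmod_two] using hpq
  have hq_mem : q ∉ ({r, p + q + r} : Set V) := by
    simpa [hqr, add_right_comm p q r, add_eq_zero_iff_eq_of_zmod_two] using hpr
  have hp_mem : p ∉ ({q, r, p + q + r} : Set V) := by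
    simpa [hpq, hpr, add_assoc, add_eq_zero_iff_eq_of_zmod_two] using hqr
  rw [ncard_insert_of_notMem hp_mem, ncard_insert_of_notMem hq_mem, ncard_pair h_mem]

/-- If four missing points sum to zero, the nine points lie on two hyperplanes carrying at least
four of them each. -/
lemma isSidon_compl_insert_zero_range [Finite V] (hV : Module.finrank (ZMod 2) V = 4)
    (hι : Nat.card ι = 9) (hv : Function.Injective v) (hv0 : ∀ i, v i ≠ 0)
    (h_sep : ∀ X : Set ι, 4 ≤ X.ncard → 4 ≤ Xᶜ.ncard → 7 ≤
      Module.finrank (ZMod 2) (Submodule.span (ZMod 2) (v '' X)) +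
        Module.finrank (ZMod 2) (Submodule.span (ZMod 2) (v '' Xᶜ))) :
    IsSidon (insert 0 (range v))ᶜ := by
  have : Finite ι := .of_injective v hv
  intro p hp q hq r hr hpq hpr hqr hs
  have ne_zero {x : V} (hx : x ∈ (insert 0 (range v))ᶜ) : x ≠ 0 := fun h ↦ hx (.inl h)
  have h_indep := linearIndependent_triple_of_zmod_two (ne_zero hp) (ne_zero hq) (ne_zero hr)
    hpq hpr hqr (ne_zero hs)
  obtain ⟨P, Q, hP, hQ, hPQ⟩ := exists_hyperplanes_compl_union_eq hV h_indep
  have h_quad : ((P : Set V) ∪ Q)ᶜ ⊆ (insert 0 (range v))ᶜ := by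
    simp only [hPQ, insert_subset_iff, singleton_subset_iff]
    exact ⟨hp, hq, hr, hs⟩
  have four_le {H : Submodule (ZMod 2) V} (hH : Module.finrank (ZMod 2) H = 3)
      (h_le : (H : Set V) ⊆ ↑P ∪ ↑Q) : 4 ≤ (v ⁻¹' H).ncard := by
    have h_count := ncard_add_ncard_le_ncard_preimage_add h_quad
      (disjoint_compl_left_iff_subset.2 h_le)
    have h_compl := ncard_compl_insert_zero_range hv hv0
    rw [hPQ, ncard_insert_add_triple hpq hpr hqr, ← Nat.card_coe_set_eq, SetLike.coe_sort_coe,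
      Module.natCard_eq_pow_finrank (K := ZMod 2), hH, Nat.card_zmod] at h_count
    rw [Module.natCard_eq_pow_finrank (K := ZMod 2) (V := V), hV, Nat.card_zmod, hι] at h_compl
    omega
  have h_cover : (v ⁻¹' Q)ᶜ ⊆ v ⁻¹' P := by
    intro i hiQ
    by_contra hiP
    exact h_quad (not_or.2 ⟨hiP, hiQ⟩ : v i ∉ (P : Set V) ∪ Q) (.inr (mem_range_self i))
  have h_le := le_finrank_add_finrank_of_cover h_sep (by omega)
    (four_le hP subset_union_left) (four_le hQ subset_union_right) h_cover
  omega

end Hyperplanes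

section Grid

variable {K R C V : Type*} [Field K] [AddCommGroup V] [Module K V]

/-- A grid of vectors, indexed by rows and columns, all of whose row sums and column sums vanish. -/
structure IsGrid [Fintype R] [Fintype C] (v : R × C → V) : Prop where
  row_sum (i : R) : ∑ j, v (i, j) = 0
  col_sum (j : C) : ∑ i, v (i, j) = 0

lemma isGrid_add_sub {A : Type*} [AddCommGroup A] [Fintype A] {x y : A → V}
    (hx : ∑ a, x a = 0) (hy : ∑ a, y a = 0) :
    IsGrid fun p : A × A ↦ x (p.1 + p.2) + y (p.1 - p.2) where
  row_sum i := by
    have hx_row := (Equiv.sum_comp (Equiv.addLeft i) x).trans hx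
    have hy_row := (Equiv.sum_comp (Equiv.subLeft i) y).trans hy
    exact Finset.sum_add_distrib.trans ((congr_arg₂ _ hx_row hy_row).trans (add_zero 0))
  col_sum j := by
    have hx_col := (Equiv.sum_comp (Equiv.addRight j) x).trans hx
    have hy_col := (Equiv.sum_comp (Equiv.subRight j) y).trans hy
    exact Finset.sum_add_distrib.trans ((congr_arg₂ _ hx_col hy_col).trans (add_zero 0))

namespace IsGrid

lemma sum_add_smul_eq_zero [Fintype R] [Fintype C] {v : R × C → V} (hv : IsGrid v) (a : R → K)
    (b : C → K) : ∑ p : R × C, (a p.1 + b p.2) • v p = 0 := by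
  have h_rows : ∑ p : R × C, a p.1 • v p = 0 := by
    simp [Fintype.sum_prod_type, ← Finset.smul_sum, hv.row_sum]
  have h_cols : ∑ p : R × C, b p.2 • v p = 0 := by
    simp [Fintype.sum_prod_type_right, ← Finset.smul_sum, hv.col_sum]
  simp only [add_smul, Finset.sum_add_distrib, h_rows, h_cols, add_zero]

variable {m n : ℕ} {v : Fin (m + 1) × Fin (n + 1) → V}

lemma top_le_span_corner (hv : IsGrid v) (h_span : Submodule.span K (range v) = ⊤) :
    ⊤ ≤ Submodule.span K (range fun p : Fin m × Fin n ↦ v (p.1.castSucc, p.2.castSucc)) := by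
  set S := Submodule.span K (range fun p : Fin m × Fin n ↦ v (p.1.castSucc, p.2.castSucc))
  have mem_of_row (i : Fin (m + 1)) (h : ∀ j : Fin n, v (i, j.castSucc) ∈ S) (j : Fin (n + 1)) :
      v (i, j) ∈ S := by
    refine Fin.lastCases ?_ h j
    have h_last := hv.row_sum i
    rw [Fin.sum_univ_castSucc, add_eq_zero_iff_eq_neg'] at h_last
    exact h_last ▸ neg_mem (sum_mem fun j _ ↦ h j)
  have mem_castSucc (i : Fin m) : ∀ j, v (i.castSucc, j) ∈ S :=
    mem_of_row _ fun j ↦ Submodule.subset_span ⟨(i, j), rfl⟩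
  have mem_all (i : Fin (m + 1)) (j : Fin (n + 1)) : v (i, j) ∈ S := by
    refine Fin.lastCases ?_ (fun i ↦ mem_castSucc i j) i
    have h_last := hv.col_sum j
    rw [Fin.sum_univ_castSucc, add_eq_zero_iff_eq_neg'] at h_last
    exact h_last ▸ neg_mem (sum_mem fun i _ ↦ mem_castSucc i j)
  rw [← h_span, Submodule.span_le]
  rintro _ ⟨⟨i, j⟩, rfl⟩
  exact mem_all i j

lemma linearIndependent_corner (hv : IsGrid v) (h_span : Submodule.span K (range v) = ⊤)
    (h_rank : Module.finrank K V = m * n) :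
    LinearIndependent K fun p : Fin m × Fin n ↦ v (p.1.castSucc, p.2.castSucc) :=
  linearIndependent_of_top_le_span_of_card_eq_finrank (hv.top_le_span_corner h_span)
    (by simp [h_rank])

lemma sum_smul_eq_zero_iff (hv : IsGrid v) (h_span : Submodule.span K (range v) = ⊤)
    (h_rank : Module.finrank K V = m * n) (k : Fin (m + 1) × Fin (n + 1) → K) :
    ∑ p, k p • v p = 0 ↔
      ∃ (a : Fin (m + 1) → K) (b : Fin (n + 1) → K), ∀ i j, k (i, j) = a i + b j := by
  constructor
  · intro hk
    let a (i : Fin (m + 1)) := k (i, Fin.last n)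
    let b (j : Fin (n + 1)) := k (Fin.last m, j) - k (Fin.last m, Fin.last n)
    have h_corner : ∑ p : Fin m × Fin n, (k (p.1.castSucc, p.2.castSucc) -
        (a p.1.castSucc + b p.2.castSucc)) • v (p.1.castSucc, p.2.castSucc) = 0 := by
      have h_sub : ∑ p, (k p - (a p.1 + b p.2)) • v p = 0 := by
        simp only [sub_smul, Finset.sum_sub_distrib, hk, hv.sum_add_smul_eq_zero, sub_zero]
      simpa [Fintype.sum_prod_type, Fin.sum_univ_castSucc, a, b] using h_sub
    have h_zero := Fintype.linearIndependent_iff.1 (hv.linearIndependent_corner h_span h_rank) _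
      h_corner
    refine ⟨a, b, fun i j ↦ ?_⟩
    refine Fin.lastCases ?_ (fun i ↦ Fin.lastCases ?_ (fun j ↦ ?_) j) i
    · simp [a, b]
    · simp [a, b]
    · exact sub_eq_zero.1 (h_zero (i, j))
  · rintro ⟨a, b, hk⟩
    simpa only [← hk] using hv.sum_add_smul_eq_zero a b

end IsGrid

lemma incVec_mk {V : Type*} [DecidableEq V] {x y : V} (hxy : x ≠ y) :
    incVec s(x, y) = Pi.single x 1 + Pi.single y 1 := by
  ext z
  by_cases hx : z = x
  · simp [incVec, hx, hxy]
  · simp [incVec, Pi.single_apply, hx]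

/-- The edges of the complete bipartite graph, labelled by pairs of endpoints. -/
def bipartiteEdge (R C : Type*) : R × C ↪ Sym2 (R ⊕ C) where
  toFun p := s(Sum.inl p.1, Sum.inr p.2)
  inj' := by rintro ⟨i, j⟩ ⟨i', j'⟩ h; simpa using h

lemma IsCycleMatroidOf.isLabelledRep {N : Matroid (Sym2 (R ⊕ C))}
    (hN : IsCycleMatroidOf N (completeBipartiteGraph R C)) :
    IsLabelledRep (ZMod 2) N (bipartiteEdge R C) (incVec ∘ bipartiteEdge R C) :=
  IsBinRepOn.isLabelledRep hN SimpleGraph.edgeSet_completeBipartiteGraph.symm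

lemma exists_dual_incVec_bipartiteEdge_iff [Finite R] [Finite C] (k : R × C → ZMod 2) :
    (∃ φ : Module.Dual (ZMod 2) (R ⊕ C → ZMod 2), ∀ p, φ (incVec (bipartiteEdge R C p)) = k p) ↔
      ∃ (a : R → ZMod 2) (b : C → ZMod 2), ∀ i j, k (i, j) = a i + b j := by
  have incVec_edge (i : R) (j : C) : incVec (bipartiteEdge R C (i, j)) =
      Pi.single (Sum.inl i) 1 + Pi.single (Sum.inr j) 1 := incVec_mk Sum.inl_ne_inr
  constructor
  · rintro ⟨φ, hφ⟩
    exact ⟨fun i ↦ φ (Pi.single (Sum.inl i) 1), fun j ↦ φ (Pi.single (Sum.inr j) 1),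
      fun i j ↦ by rw [← hφ, incVec_edge, map_add]⟩
  · rintro ⟨a, b, hk⟩
    have := Fintype.ofFinite (R ⊕ C)
    refine ⟨Fintype.linearCombination (ZMod 2) (Sum.elim a b), fun ⟨i, j⟩ ↦ ?_⟩
    simp [incVec_edge, hk, Fintype.linearCombination_apply_single]

lemma IsGrid.areDualFamilies_incVec {V : Type*} [AddCommGroup V] [Module (ZMod 2) V] {m n : ℕ}
    {v : Fin (m + 1) × Fin (n + 1) → V} (hv : IsGrid v)
    (h_span : Submodule.span (ZMod 2) (range v) = ⊤)
    (h_rank : Module.finrank (ZMod 2) V = m * n) :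
    AreDualFamilies (ZMod 2) v (incVec ∘ bipartiteEdge (Fin (m + 1)) (Fin (n + 1))) := fun k ↦
  (hv.sum_smul_eq_zero_iff h_span h_rank k).trans (exists_dual_incVec_bipartiteEdge_iff k).symm

end Grid

section NinePoints

lemma injective_add_sub_fin_three :
    Function.Injective fun p : Fin 3 × Fin 3 ↦ (p.1 + p.2, p.1 - p.2) := by
  decide

variable {ι V : Type*} [AddCommGroup V] [Module (ZMod 2) V]

lemma IsSidon.exists_isGrid [Finite V] {v : ι → V} (hT : IsSidon (insert 0 (range v))ᶜ)
    (hV : Module.finrank (ZMod 2) V = 4) (hι : Nat.card ι = 9) (hv : Function.Injective v)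
    (hv0 : ∀ i, v i ≠ 0) : ∃ e : Fin 3 × Fin 3 ≃ ι, IsGrid (v ∘ e) := by
  have : Finite ι := .of_injective v hv
  have hV_card : Nat.card V = 16 := by
    rw [Module.natCard_eq_pow_finrank (K := ZMod 2), hV, Nat.card_zmod]
    rfl
  have hT_card : (insert 0 (range v))ᶜ.ncard = 6 := by
    have := ncard_compl_insert_zero_range hv hv0
    omega
  have h_zero : (0 : V) ∉ (insert 0 (range v))ᶜ := by simp
  obtain ⟨L, L', hL, hL', hLT, hLT', h_disj⟩ :=
    hT.exists_disjoint_lines (by rw [hV_card, hT_card]; decide) h_zero (by omega)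
  obtain ⟨x, hx_inj, hxL, hx_sum⟩ := hL.exists_enumeration
  obtain ⟨y, hy_inj, hyL', hy_sum⟩ := hL'.exists_enumeration
  have h_mem (i j : Fin 3) : x i + y j ∈ range v := by
    have h_notMem := hT.add_notMem_of_mem_lines hL hL' hLT hLT' h_disj h_zero (hxL i) (hyL' j)
    refine (not_notMem.1 h_notMem).resolve_left fun h ↦ ?_
    exact Finset.disjoint_iff_ne.1 h_disj _ (hxL i) _ (hyL' j) (add_eq_zero_iff_eq_of_zmod_two.1 h)
  choose label h_label using fun p : Fin 3 × Fin 3 ↦ h_mem (p.1 + p.2) (p.1 - p.2)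
  have h_inj : Function.Injective label := by
    intro p q hpq
    have h_add : x (p.1 + p.2) + y (p.1 - p.2) = x (q.1 + q.2) + y (q.1 - q.2) := by
      rw [← h_label, ← h_label, hpq]
    obtain ⟨hx, hy⟩ := hT.eq_and_eq_of_add_eq_add hLT hLT' h_disj (hxL _) (hxL _) (hyL' _)
      (hyL' _) h_add
    exact injective_add_sub_fin_three (Prod.ext (hx_inj hx) (hy_inj hy))
  refine ⟨.ofBijective label (h_inj.bijective_of_nat_card_le (by simp [hι])), ?_⟩
  rw [Equiv.coe_ofBijective, show v ∘ label = _ from funext h_label]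
  exact isGrid_add_sub hx_sum hy_sum

lemma nat_card_lt_two_pow_finrank [Finite V] {v : ι → V} (hv : Function.Injective v)
    (hv0 : ∀ i, v i ≠ 0) : Nat.card ι < 2 ^ Module.finrank (ZMod 2) V := by
  have h_compl := ncard_compl_insert_zero_range hv hv0
  rw [Module.natCard_eq_pow_finrank (K := ZMod 2) (V := V), Nat.card_zmod] at h_compl
  omega

variable {α : Type*} {M : Matroid α} [M.Finite] {g : ι ↪ α} {v : ι → V}

namespace IsLabelledRep

lemma exists_isGrid [Finite V] (hv : IsLabelledRep (ZMod 2) M g v) (h9 : M.E.ncard = 9)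
    (h : mInternally4 M) (h_rank : mRk M M.E = 4) (hV : Module.finrank (ZMod 2) V = 4) :
    ∃ e : Fin 3 × Fin 3 ≃ ι, IsGrid (v ∘ e) := by
  have hι : Nat.card ι = 9 := by
    rw [← h9, ← hv.range_eq, ncard_range_of_injective g.injective]
  have hv_inj := hv.injective_of_mThreeConnected h.1 (by omega)
  have hv0 := hv.ne_zero_of_mThreeConnected h.1 (by omega)
  have hT := isSidon_compl_insert_zero_range hV hι hv_inj hv0 fun X hX hX' ↦ by
    simpa only [h_rank] using hv.finrank_add_three_le h hX hX'
  exact hT.exists_isGrid hV hι hv_inj hv0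

lemma matroidIso_dual_of_span_eq_top [Finite V] (hv : IsLabelledRep (ZMod 2) M g v)
    (h9 : M.E.ncard = 9) (h : mInternally4 M) (h_rank : mRk M M.E ≤ 4)
    (h_span : Submodule.span (ZMod 2) (range v) = ⊤) {N : Matroid (Sym2 (Fin 3 ⊕ Fin 3))}
    (hN : IsCycleMatroidOf N (completeBipartiteGraph (Fin 3) (Fin 3))) : MatroidIso M✶ N := by
  have hV_rank : mRk M M.E = Module.finrank (ZMod 2) V := by
    rw [hv.mRk_ground, h_span, finrank_top]
  have hV : Module.finrank (ZMod 2) V = 4 := by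
    have h_card := nat_card_lt_two_pow_finrank (hv.injective_of_mThreeConnected h.1 (by omega))
      (hv.ne_zero_of_mThreeConnected h.1 (by omega))
    rw [← ncard_range_of_injective g.injective, hv.range_eq, h9] at h_card
    have h_lt : 2 ^ 3 < 2 ^ Module.finrank (ZMod 2) V := by omega
    exact le_antisymm (hV_rank ▸ h_rank) ((Nat.pow_lt_pow_iff_right one_lt_two).1 h_lt)
  obtain ⟨e, h_grid⟩ := hv.exists_isGrid h9 h (hV_rank.trans hV) hV
  have h_dual := h_grid.areDualFamilies_incVec (m := 2) (n := 2)
    (by rwa [e.surjective.range_comp]) hV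
  exact ((hv.relabel e).dual h_dual).matroidIso hN.isLabelledRep

end IsLabelledRep

theorem IsLabelledRep.matroidIso_dual_of_mRk_le_four (hv : IsLabelledRep (ZMod 2) M g v)
    (h9 : M.E.ncard = 9) (h : mInternally4 M) (h_rank : mRk M M.E ≤ 4)
    {N : Matroid (Sym2 (Fin 3 ⊕ Fin 3))}
    (hN : IsCycleMatroidOf N (completeBipartiteGraph (Fin 3) (Fin 3))) : MatroidIso M✶ N := by
  let W := Submodule.span (ZMod 2) (range v)
  let w (i : ι) : W := ⟨v i, Submodule.subset_span (mem_range_self i)⟩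
  have hw : IsLabelledRep (ZMod 2) M g w := (comp_linearMap_iff W.subtype_injective).1 hv
  have hw_span : Submodule.span (ZMod 2) (range w) = ⊤ := by
    refine Submodule.map_injective_of_injective W.subtype_injective ?_
    rw [Submodule.map_span, ← range_comp, Submodule.map_top, W.range_subtype]
    rfl
  have : Finite ι := (finite_range_iff g.injective).1 (hv.range_eq ▸ M.ground_finite)
  have := FiniteDimensional.span_of_finite (ZMod 2) (finite_range v)
  have : Finite W := Module.finite_of_finite (ZMod 2)
  exact hw.matroidIso_dual_of_span_eq_top h9 h h_rank hw_span hN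

end NinePoints

/-- Every internally 4-connected binary matroid with exactly 9 elements is isomorphic to
`M(K_{3,3})` or its dual. -/
theorem statement16 {α : Type*} (M : Matroid α) (hb : mBinary M) (h9 : M.E.ncard = 9)
    (h4 : mInternally4 M)
    (N : Matroid (Sym2 (Fin 3 ⊕ Fin 3)))
    (hN : IsCycleMatroidOf N (completeBipartiteGraph (Fin 3) (Fin 3))) :
    MatroidIso M N ∨ MatroidIso M N✶ := by
  obtain ⟨n, u, hu⟩ := hb
  have hM_fin : M.E.Finite := finite_of_ncard_pos (by omega)
  have : M.Finite := ⟨hM_fin⟩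
  have : Fintype M.E := hM_fin.fintype
  have hv : IsLabelledRep (ZMod 2) M (Function.Embedding.subtype (· ∈ M.E)) _ :=
    hu.isLabelledRep Subtype.range_val
  have h_ranks := mRk_ground_add_mRk_dual_ground M
  obtain h_rank | h_rank : mRk M M.E ≤ 4 ∨ mRk M✶ M✶.E ≤ 4 := by omega
  · right
    simpa using (hv.matroidIso_dual_of_mRk_le_four h9 h4 h_rank hN).dual
  · left
    have hv_dual := hv.dual (areDualFamilies_proj_domRestrict _)
    simpa using hv_dual.matroidIso_dual_of_mRk_le_four h9 h4.dual h_rank hN
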